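/- arXiv:1102.2516 — 4 statements merged into one kernel-verified Lean document; each statement's English description precedes it below -/
import Mathlib

section
/- Let k ≤ n be positive integers, let G be a k×n generator matrix of a binary linear code (a k×n matrix over F_2 of rank k), and let p ∈ [0,1]. For a column index j ∈ {1,…,n} and a set K ⊆ {1,…,n}\{j}, say that position j is recoverable from K if the j-th column of G lies in the F_2-linear span of the columns of G indexed by K. Then the average over j ∈ {1,…,n} of the probability that position j is not recoverable from a random set K obtained by including each index of {1,…,n}\{j} independently with probability 1−p, namely (1/n) Σ_{j=1}^{n} Σ_{K ⊆ {1,…,n}\{j}} (1−p)^{|K|} p^{n−1−|K|} · 1[j is not recoverable from K], equals (1/n) Σ_{t=0}^{n−1} p^t (1−p)^{n−1−t} [ (n−t)·ẽ_{n−t} − (t+1)·ẽ_{n−1−t} ], where ẽ_g denotes the g-th un-normalized information function of G. -/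
/-!
Write `r S` for the rank of the columns indexed by `S`. For `j ∉ K`, the indicator that `j` is not
recoverable from `K` is the rank increment `r (K ∪ {j}) - r K` (`colRank_insert`). Split the sum
over `K` according to `m = |K|`; within a given size the weight is constant, so what remains is a
double count of the pairs `(j, K)` with `j ∉ K` and `|K| = m`. Every set `S` of size `m + 1` arises
as `K ∪ {j}` from exactly `m + 1` such pairs (`sum_colRank_insert`), and every `K` of size `m`
is the second component of exactly `n - m` of them (`sum_colRank`). The substitution `m = n - 1 - t` gives the
formula.
-/

attribute [local instance] Classical.propDecidable

/-- Rank of the submatrix of `G` formed by the columns indexed by `S`. -/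
noncomputable def colRank {k n : ℕ} (G : Matrix (Fin k) (Fin n) (ZMod 2))
    (S : Finset (Fin n)) : ℕ :=
  (G.submatrix id (Subtype.val : {x // x ∈ S} → Fin n)).rank

/-- The `g`-th un-normalized information function of `G`: the sum, over all
`g`-element subsets `S` of the column indices, of the rank of the submatrix
formed by the columns indexed by `S`. -/
noncomputable def infoFun {k n : ℕ} (G : Matrix (Fin k) (Fin n) (ZMod 2)) (g : ℕ) : ℕ :=
  ∑ S ∈ Finset.univ.filter (fun S : Finset (Fin n) => S.card = g), colRank G S

/-- Position `j` is recoverable from the set `K` of known positions if the `j`-th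
column of `G` lies in the `𝔽₂`-linear span of the columns of `G` indexed by `K`. -/
def Recoverable {k n : ℕ} (G : Matrix (Fin k) (Fin n) (ZMod 2))
    (j : Fin n) (K : Finset (Fin n)) : Prop :=
  (fun i => G i j) ∈
    Submodule.span (ZMod 2) ((fun j' : Fin n => fun i => G i j') '' (K : Set (Fin n)))

theorem colRank_eq_finrank {k n : ℕ} (G : Matrix (Fin k) (Fin n) (ZMod 2))
    (S : Finset (Fin n)) :
    colRank G S = Module.finrank (ZMod 2) (Submodule.span (ZMod 2)
      ((fun j' : Fin n => fun i => G i j') '' (S : Set (Fin n)))) := by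
  unfold colRank
  have h : Set.range (G.submatrix id (Subtype.val : {x // x ∈ S} → Fin n)).col
      = (fun j' : Fin n => fun i => G i j') '' (S : Set (Fin n)) := by
    ext v
    constructor
    · rintro ⟨x, rfl⟩
      exact ⟨x.1, x.2, rfl⟩
    · rintro ⟨x, hx, rfl⟩
      exact ⟨⟨x, hx⟩, rfl⟩
  rw [Matrix.rank_eq_finrank_span_cols, h]

/-- Adjoining the column `j` raises the rank by one exactly when `j` is not recoverable. -/
theorem colRank_insert {k n : ℕ} (G : Matrix (Fin k) (Fin n) (ZMod 2))
    (j : Fin n) (K : Finset (Fin n)) :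
    colRank G (insert j K) = colRank G K + if Recoverable G j K then 0 else 1 := by
  have : Fact (Nat.Prime 2) := ⟨Nat.prime_two⟩
  rw [colRank_eq_finrank, colRank_eq_finrank, Finset.coe_insert, Set.image_insert_eq]
  split_ifs with h
  · rw [Submodule.span_insert_eq_span h, add_zero]
  · rw [Submodule.span_insert, sup_comm, Submodule.finrank_sup_span_singleton h]

/-- Each `S` of size `m + 1` is `insert j K` for exactly `m + 1` pairs `(j, K)`, one for each
`j ∈ S`. -/
theorem sum_colRank_insert {k n : ℕ} (G : Matrix (Fin k) (Fin n) (ZMod 2)) (m : ℕ) :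
    ∑ j : Fin n, ∑ K ∈ (Finset.univ.erase j).powersetCard m, colRank G (insert j K)
      = (m + 1) * infoFun G (m + 1) := by
  have h : (m + 1) * infoFun G (m + 1) =
      ∑ S ∈ Finset.univ.filter (fun S : Finset (Fin n) => S.card = m + 1),
        ∑ _j ∈ S, colRank G S := by
    rw [infoFun, Finset.mul_sum]
    refine Finset.sum_congr rfl fun S hS => ?_
    rw [Finset.sum_const, (Finset.mem_filter.mp hS).2, smul_eq_mul]
  rw [h, Finset.sum_sigma', Finset.sum_sigma']
  refine Finset.sum_bij' (fun x _ => ⟨insert x.1 x.2, x.1⟩) (fun y _ => ⟨y.2, y.1.erase y.2⟩)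
    ?_ ?_ ?_ ?_ ?_
  · rintro ⟨j, K⟩ hx
    simp only [Finset.mem_sigma, Finset.mem_univ, true_and, Finset.mem_powersetCard,
      Finset.mem_filter] at hx ⊢
    have hj : j ∉ K := fun hj => Finset.notMem_erase j _ (hx.1 hj)
    exact ⟨by rw [Finset.card_insert_of_notMem hj, hx.2], Finset.mem_insert_self _ _⟩
  · rintro ⟨S, j⟩ hy
    simp only [Finset.mem_sigma, Finset.mem_univ, true_and, Finset.mem_powersetCard,
      Finset.mem_filter] at hy ⊢
    exact ⟨Finset.erase_subset_erase _ (Finset.subset_univ _),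
      by rw [Finset.card_erase_of_mem hy.2, hy.1, Nat.add_sub_cancel]⟩
  · rintro ⟨j, K⟩ hx
    simp only [Finset.mem_sigma, Finset.mem_univ, true_and, Finset.mem_powersetCard] at hx
    have hj : j ∉ K := fun hj => Finset.notMem_erase j _ (hx.1 hj)
    simp only [Finset.erase_insert hj]
  · rintro ⟨S, j⟩ hy
    simp only [Finset.mem_sigma] at hy
    simp only [Finset.insert_erase hy.2]
  · rintro ⟨j, K⟩ _
    rfl

/-- Each `K` of size `m` avoids exactly `n - m` indices `j`. -/
theorem sum_colRank {k n : ℕ} (G : Matrix (Fin k) (Fin n) (ZMod 2)) (m : ℕ) :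
    ∑ j : Fin n, ∑ K ∈ (Finset.univ.erase j).powersetCard m, colRank G K
      = (n - m) * infoFun G m := by
  rw [Finset.sum_comm' (t' := Finset.univ.filter (fun S : Finset (Fin n) => S.card = m))
    (s' := fun K => Kᶜ), infoFun, Finset.mul_sum]
  · refine Finset.sum_congr rfl fun K hK => ?_
    rw [Finset.sum_const, Finset.card_compl, Fintype.card_fin, (Finset.mem_filter.mp hK).2,
      smul_eq_mul]
  · intro j K
    simp [Finset.mem_powersetCard, Finset.subset_erase]

theorem stmt0 (k n : ℕ) (hk : 0 < k) (hkn : k ≤ n)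
    (G : Matrix (Fin k) (Fin n) (ZMod 2)) (hG : G.rank = k)
    (p : ℝ) (hp0 : 0 ≤ p) (hp1 : p ≤ 1) :
    (1 / n : ℝ) * ∑ j : Fin n, ∑ K ∈ (Finset.univ.erase j).powerset,
        (1 - p) ^ K.card * p ^ (n - 1 - K.card) *
          (if Recoverable G j K then 0 else 1)
    = (1 / n : ℝ) * ∑ t ∈ Finset.range n,
        p ^ t * (1 - p) ^ (n - 1 - t) *
          (((n - t : ℕ) : ℝ) * (infoFun G (n - t) : ℝ)
            - ((t + 1 : ℕ) : ℝ) * (infoFun G (n - 1 - t) : ℝ)) := by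
  congr 1
  have hn : 0 < n := hk.trans_le hkn
  have hsplit : ∀ j : Fin n, ∑ K ∈ (Finset.univ.erase j).powerset,
      (1 - p) ^ K.card * p ^ (n - 1 - K.card) * (if Recoverable G j K then (0 : ℝ) else 1)
      = ∑ m ∈ Finset.range n, (1 - p) ^ m * p ^ (n - 1 - m) *
        ∑ K ∈ (Finset.univ.erase j).powersetCard m,
          ((colRank G (insert j K) : ℝ) - colRank G K) := by
    intro j
    rw [Finset.sum_powerset, Finset.card_erase_of_mem (Finset.mem_univ j), Finset.card_univ,
      Fintype.card_fin, Nat.sub_add_cancel hn]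
    refine Finset.sum_congr rfl fun m _ => ?_
    rw [Finset.mul_sum]
    refine Finset.sum_congr rfl fun K hK => ?_
    rw [(Finset.mem_powersetCard.mp hK).2, colRank_insert]
    push_cast
    ring
  rw [Finset.sum_congr rfl fun j _ => hsplit j, Finset.sum_comm, ← Finset.sum_range_reflect]
  refine Finset.sum_congr rfl fun t ht => ?_
  have ht : t < n := Finset.mem_range.mp ht
  have hA := sum_colRank_insert G (n - 1 - t)
  have hB := sum_colRank G (n - 1 - t)
  rw [show n - 1 - t + 1 = n - t by omega] at hA
  rw [show n - (n - 1 - t) = t + 1 by omega] at hB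
  rw [← Finset.mul_sum, show n - 1 - (n - 1 - t) = t by omega, mul_comm (_ ^ _) (p ^ t)]
  simp only [Finset.sum_sub_distrib]
  congr 1
  rw [← Nat.cast_mul, ← Nat.cast_mul, ← hA, ← hB]
  push_cast
  rfl
end

section
/- Let G be a k×n generator matrix (a k×n matrix over F_2 of rank k, with k ≤ n, n ≥ 2) of a binary linear code C whose minimum distance satisfies d_min ≥ 2. Then the sum, over all (n−2)-element subsets S of the column indices of G, of the rank deficiency k − rank(G_S) of the corresponding k×(n−2) submatrix G_S, equals A_2, the number of codewords of C of Hamming weight exactly 2. In particular this sum is 0 if and only if d_min ≥ 3. -/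
/-!
For a set `S` of `n - 2` columns, `k - rank G_S` is the dimension of the kernel of `u ↦ u G_S`, and,
since `u ↦ u G` is injective, of the subcode of codewords vanishing on `S` (`card_vanishing`).
A nonzero codeword of this subcode has weight at most 2, hence exactly 2 by the minimum distance
hypothesis, so over `𝔽₂` it is the indicator of the complement of `S`. The subcode therefore has
one element more than the number (0 or 1) of weight-2 codewords with zero set `S`; comparing with
`2 ^ (k - rank G_S)`, the rank deficiency equals that number (`deficiency_eq`). Summing over `S`
counts each weight-2 codeword once, through its zero set.
-/

attribute [local instance] Classical.propDecidable

/-- Hamming weight of a binary vector. -/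
def wt {n : ℕ} (c : Fin n → ZMod 2) : ℕ :=
  (Finset.univ.filter (fun i => c i ≠ 0)).card

/-- The coordinates at which `c` vanishes. -/
noncomputable def zeroSet {n : ℕ} (c : Fin n → ZMod 2) : Finset (Fin n) :=
  Finset.univ.filter (fun i => c i = 0)

lemma mem_zeroSet {n : ℕ} (c : Fin n → ZMod 2) (i : Fin n) : i ∈ zeroSet c ↔ c i = 0 := by
  simp [zeroSet]

lemma zeroSet_card_add_wt {n : ℕ} (c : Fin n → ZMod 2) : (zeroSet c).card + wt c = n := by
  have h := Finset.card_filter_add_card_filter_not (s := (Finset.univ : Finset (Fin n)))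
    (fun i => c i = 0)
  simp only [Finset.card_univ, Fintype.card_fin] at h
  unfold zeroSet wt
  convert h using 2

/-- A binary vector is determined by its zero set. -/
lemma zeroSet_injective {n : ℕ} : Function.Injective (zeroSet (n := n)) := by
  intro c d h
  funext i
  have hi : c i = 0 ↔ d i = 0 := by rw [← mem_zeroSet, ← mem_zeroSet, h]
  have key : ∀ a b : ZMod 2, (a = 0 ↔ b = 0) → a = b := by
    decide
  exact key _ _ hi

/-- The subcode of codewords vanishing on `S` has dimension `k - rank G_S`: it is the image under
the injective encoder `u ↦ u G` of the kernel of `u ↦ u G_S`. Over `𝔽₂` it therefore has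
`2 ^ (k - rank G_S)` elements. -/
lemma card_vanishing {k n : ℕ} (G : Matrix (Fin k) (Fin n) (ZMod 2)) (hG : G.rank = k)
    (S : Finset (Fin n)) :
    (Finset.univ.filter (fun c : Fin n → ZMod 2 =>
      c ∈ LinearMap.range G.vecMulLinear ∧ S ⊆ zeroSet c)).card = 2 ^ (k - colRank G S) := by
  have rk : ∀ {m : Type} [Fintype m] (M : Matrix (Fin k) m (ZMod 2)),
      M.rank + Module.finrank (ZMod 2) (LinearMap.ker M.vecMulLinear) = k := by
    intro m _ M
    have h := LinearMap.finrank_range_add_finrank_ker M.vecMulLinear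
    rw [Module.finrank_fin_fun, range_vecMulLinear, ← Matrix.rank_eq_finrank_span_row] at h
    exact h
  have hinj : Function.Injective G.vecMulLinear := by
    rw [← LinearMap.ker_eq_bot, ← Submodule.finrank_eq_zero (R := ZMod 2)]
    have := rk G
    omega
  set K := LinearMap.ker (G.submatrix id (Subtype.val : {x // x ∈ S} → Fin n)).vecMulLinear
    with hK
  have hd : Module.finrank (ZMod 2) (K.map G.vecMulLinear) = k - colRank G S := by
    rw [← (Submodule.equivMapOfInjective G.vecMulLinear hinj K).finrank_eq]
    have := rk (G.submatrix id (Subtype.val : {x // x ∈ S} → Fin n))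
    rw [← hK] at this
    unfold colRank
    omega
  have hmem : ∀ c : Fin n → ZMod 2, c ∈ K.map G.vecMulLinear ↔
      c ∈ LinearMap.range G.vecMulLinear ∧ S ⊆ zeroSet c := by
    intro c
    have hu : ∀ u, u ∈ K ↔ S ⊆ zeroSet (G.vecMulLinear u) := by
      intro u
      rw [hK, LinearMap.mem_ker, funext_iff]
      constructor
      · intro h i hi
        rw [mem_zeroSet]
        exact h ⟨i, hi⟩
      · intro h i
        exact (mem_zeroSet _ _).1 (h i.2)
    constructor
    · rintro ⟨u, h, rfl⟩
      exact ⟨⟨u, rfl⟩, (hu u).1 h⟩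
    · rintro ⟨⟨u, rfl⟩, h⟩
      exact ⟨u, (hu u).2 h, rfl⟩
  have hc := Module.card_eq_pow_finrank (K := ZMod 2) (V := K.map G.vecMulLinear)
  rw [hd, ZMod.card, Fintype.card_subtype] at hc
  rw [← hc]
  congr 1
  ext c
  simp only [Finset.mem_filter, Finset.mem_univ, true_and, hmem]

/-- The subcode vanishing on `S` consists of `0` and the weight-2 codewords with zero set `S`, of
which there is at most one, so its dimension is the number of the latter. -/
lemma deficiency_eq {k n : ℕ} (hn : 2 ≤ n) (G : Matrix (Fin k) (Fin n) (ZMod 2))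
    (hG : G.rank = k)
    (hdmin : ∀ c ∈ LinearMap.range G.vecMulLinear, c ≠ 0 → 2 ≤ wt c)
    (S : Finset (Fin n)) (hS : S.card = n - 2) :
    k - colRank G S = ((Finset.univ.filter (fun c : Fin n → ZMod 2 =>
      c ∈ LinearMap.range G.vecMulLinear ∧ wt c = 2)).filter (fun c => zeroSet c = S)).card := by
  set F := (Finset.univ.filter (fun c : Fin n → ZMod 2 =>
      c ∈ LinearMap.range G.vecMulLinear ∧ wt c = 2)).filter (fun c => zeroSet c = S) with hF
  have hF1 : F.card ≤ 1 := by
    rw [Finset.card_le_one]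
    intro a ha b hb
    exact zeroSet_injective ((Finset.mem_filter.1 ha).2.trans (Finset.mem_filter.1 hb).2.symm)
  have h0 : (0 : Fin n → ZMod 2) ∉ F := by
    simp [hF, wt]
  have hT : Finset.univ.filter (fun c : Fin n → ZMod 2 =>
      c ∈ LinearMap.range G.vecMulLinear ∧ S ⊆ zeroSet c) = insert 0 F := by
    ext c
    simp only [hF, Finset.mem_insert, Finset.mem_filter, Finset.mem_univ, true_and]
    constructor
    · rintro ⟨hc, hsub⟩
      by_cases hc0 : c = 0
      · exact Or.inl hc0
      · right
        have h2 := hdmin c hc hc0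
        have hle := Finset.card_le_card hsub
        have hz := zeroSet_card_add_wt c
        exact ⟨⟨hc, by omega⟩, (Finset.eq_of_subset_of_card_le hsub (by omega)).symm⟩
    · rintro (rfl | ⟨⟨hc, -⟩, rfl⟩)
      · exact ⟨zero_mem _, fun i _ => (mem_zeroSet _ _).2 rfl⟩
      · exact ⟨hc, subset_rfl⟩
  have hcard := card_vanishing G hG S
  rw [hT, Finset.card_insert_of_notMem h0] at hcard
  -- `2 ^ d = F.card + 1` with `F.card ≤ 1` forces `d = F.card`
  have hlt := Nat.lt_two_pow_self (n := k - colRank G S)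
  generalize k - colRank G S = d at hcard hlt ⊢
  have hd : d ≤ 1 := by omega
  interval_cases d <;> omega

theorem stmt7 (k n : ℕ) (hk : 0 < k) (hkn : k ≤ n) (hn : 2 ≤ n)
    (G : Matrix (Fin k) (Fin n) (ZMod 2)) (hG : G.rank = k)
    (hdmin : ∀ c ∈ LinearMap.range G.vecMulLinear, c ≠ 0 → 2 ≤ wt c) :
    (∑ S ∈ Finset.univ.filter (fun S : Finset (Fin n) => S.card = n - 2),
        (k - colRank G S))
      = (Finset.univ.filter (fun c : Fin n → ZMod 2 =>
          c ∈ LinearMap.range G.vecMulLinear ∧ wt c = 2)).card ∧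
    ((∑ S ∈ Finset.univ.filter (fun S : Finset (Fin n) => S.card = n - 2),
        (k - colRank G S)) = 0 ↔
      ∀ c ∈ LinearMap.range G.vecMulLinear, c ≠ 0 → 3 ≤ wt c) := by
  have hsum : (∑ S ∈ Finset.univ.filter (fun S : Finset (Fin n) => S.card = n - 2),
        (k - colRank G S))
      = (Finset.univ.filter (fun c : Fin n → ZMod 2 =>
          c ∈ LinearMap.range G.vecMulLinear ∧ wt c = 2)).card := by
    rw [Finset.card_eq_sum_card_fiberwise (f := zeroSet)
      (t := Finset.univ.filter (fun S : Finset (Fin n) => S.card = n - 2))]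
    · refine Finset.sum_congr rfl fun S hS => ?_
      exact deficiency_eq hn G hG hdmin S (Finset.mem_filter.1 hS).2
    · intro c hc
      have hw : wt c = 2 := (Finset.mem_filter.1 hc).2.2
      have hz := zeroSet_card_add_wt c
      exact Finset.mem_filter.2 ⟨Finset.mem_univ _, by omega⟩
  refine ⟨hsum, ?_⟩
  rw [hsum, Finset.card_eq_zero, Finset.filter_eq_empty_iff]
  constructor
  · intro h c hc hc0
    have h2 := hdmin c hc hc0
    have h3 : wt c ≠ 2 := fun hw => h (Finset.mem_univ c) ⟨hc, hw⟩
    omega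
  · rintro h c - ⟨hc, hw⟩
    have hc0 : c ≠ 0 := by
      rintro rfl
      simp [wt] at hw
    have := h c hc hc0
    omega
end

section
/- Let k ≥ 1 and let C_1,…,C_{n_c} be binary linear codes, where C_h has length n_h, a k×n_h generator matrix of rank k, and minimum distance d^{(h)}_min ≥ 2; let P_1,…,P_{n_c} be nonnegative reals summing to 1. Define a^{(h)}_t := (n_h−t)·ẽ^{(h)}_{n_h−t} − (t+1)·ẽ^{(h)}_{n_h−1−t} (with ẽ^{(h)}_g the g-th un-normalized information function of the generator matrix of C_h) and, for G > 0, f(x,G) := 1 − exp( −(G/k) Σ_{h=1}^{n_c} P_h Σ_{t=0}^{n_h−1} a^{(h)}_t x^t (1−x)^{n_h−1−t} ). Then f(0,G) = 0 for every G, and the partial derivative of f with respect to x at x = 0 equals (2G/k)·Ā_2, where Ā_2 := Σ_{h=1}^{n_c} P_h A^{(h)}_2 and A^{(h)}_2 is the number of weight-2 codewords of C_h. -/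
/-!
Write `e_g` for the information functions of one generator matrix `M` of rank `k`. By rank–nullity,
deleting the columns in `T` lowers the rank by the dimension of the space of codewords supported
in `T`, computed on messages because encoding is injective (`colRank_add_finrank_ker`,
`vecMulLinear_injective_of_rank`). With minimum distance at least `2`, this space is trivial for
`|T| ≤ 1` (`colRank_compl_of_card_le_one`); for `|T| = 2` it is a line when the indicator vector
of `T` is a codeword and trivial otherwise (`colRank_compl_of_card_eq_two`). Summing over `T`
gives `a_0 = n e_n - e_{n-1} = 0` and `a_1 = (n-1) e_{n-1} - 2 e_{n-2} = 2 A_2`. These are the value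
and the derivative at `0` of the polynomial `∑ a_t x^t (1-x)^{n-1-t}` (`hasDerivAt_bernstein_sum`),
and the chain rule for `exp` finishes the proof.
-/

attribute [local instance] Classical.propDecidable

/-! ### Binary vectors and their supports -/

/-- The indicator vector of a set of coordinates, the unique binary vector with that support. -/
noncomputable def indVec {n : ℕ} (T : Finset (Fin n)) : Fin n → ZMod 2 :=
  fun i => if i ∈ T then 1 else 0

lemma zmod_two_eq_one {x : ZMod 2} (h : x ≠ 0) : x = 1 := by
  revert h; revert x; decide

lemma supp_indVec {n : ℕ} (T : Finset (Fin n)) :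
    Finset.univ.filter (fun i => indVec T i ≠ 0) = T := by
  ext i; simp [indVec]

lemma indVec_supp {n : ℕ} (c : Fin n → ZMod 2) :
    indVec (Finset.univ.filter (fun i => c i ≠ 0)) = c := by
  funext i
  by_cases h : c i = 0
  · simp [indVec, h]
  · simp [indVec, zmod_two_eq_one h]

lemma wt_indVec {n : ℕ} (T : Finset (Fin n)) : wt (indVec T) = T.card := by
  unfold wt; rw [supp_indVec]

/-! ### Rank after deleting columns -/

/-- The messages whose codeword vanishes on the coordinates in `S`. -/
noncomputable def vanishOn {k n : ℕ} (M : Matrix (Fin k) (Fin n) (ZMod 2))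
    (S : Finset (Fin n)) : Submodule (ZMod 2) (Fin k → ZMod 2) :=
  LinearMap.ker (M.submatrix id (Subtype.val : {x // x ∈ S} → Fin n)).vecMulLinear

lemma mem_vanishOn {k n : ℕ} (M : Matrix (Fin k) (Fin n) (ZMod 2)) (S : Finset (Fin n))
    (u : Fin k → ZMod 2) : u ∈ vanishOn M S ↔ ∀ i ∈ S, M.vecMulLinear u i = 0 := by
  unfold vanishOn
  rw [LinearMap.mem_ker, funext_iff]
  constructor
  · intro h i hi
    exact h ⟨i, hi⟩
  · rintro h ⟨i, hi⟩
    exact h i hi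

lemma colRank_add_finrank_ker {k n : ℕ} (M : Matrix (Fin k) (Fin n) (ZMod 2))
    (S : Finset (Fin n)) :
    colRank M S + Module.finrank (ZMod 2) (vanishOn M S) = k := by
  have h := LinearMap.finrank_range_add_finrank_ker
    (M.submatrix id (Subtype.val : {x // x ∈ S} → Fin n)).vecMulLinear
  rw [Module.finrank_fin_fun] at h
  have h2 : colRank M S = Module.finrank (ZMod 2) (LinearMap.range
      (M.submatrix id (Subtype.val : {x // x ∈ S} → Fin n)).vecMulLinear) := by
    unfold colRank
    rw [← Matrix.rank_transpose, Matrix.rank, Matrix.mulVecLin_transpose]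
  rw [h2]
  exact h

lemma vecMulLinear_injective_of_rank {k n : ℕ} (M : Matrix (Fin k) (Fin n) (ZMod 2))
    (hr : M.rank = k) : Function.Injective M.vecMulLinear := by
  have h := LinearMap.finrank_range_add_finrank_ker M.vecMulLinear
  rw [Module.finrank_fin_fun] at h
  rw [← Matrix.rank_transpose, Matrix.rank, Matrix.mulVecLin_transpose] at hr
  rw [← LinearMap.ker_eq_bot, ← Submodule.finrank_eq_zero (R := ZMod 2)]
  omega

/-- A codeword vanishing off `T` has its support inside `T`. -/
lemma supp_subset_of_mem_vanishOn {k n : ℕ} {M : Matrix (Fin k) (Fin n) (ZMod 2)}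
    {T : Finset (Fin n)} {u : Fin k → ZMod 2} (hu : u ∈ vanishOn M Tᶜ) :
    Finset.univ.filter (fun i => M.vecMulLinear u i ≠ 0) ⊆ T := by
  intro i hi
  by_contra hT
  exact (Finset.mem_filter.1 hi).2 ((mem_vanishOn M _ u).1 hu i (Finset.mem_compl.2 hT))

lemma colRank_compl_of_card_le_one {k n : ℕ} (M : Matrix (Fin k) (Fin n) (ZMod 2))
    (hr : M.rank = k)
    (hd : ∀ c ∈ LinearMap.range M.vecMulLinear, c ≠ 0 → 2 ≤ wt c)
    (T : Finset (Fin n)) (hT : T.card ≤ 1) : colRank M Tᶜ = k := by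
  have h := colRank_add_finrank_ker M Tᶜ
  have h0 : vanishOn M Tᶜ = ⊥ := by
    rw [Submodule.eq_bot_iff]
    intro u hu
    by_contra hne
    have h2 := hd _ ⟨u, rfl⟩ (fun h0 => hne
      (vecMulLinear_injective_of_rank M hr (h0.trans (map_zero _).symm)))
    have h3 := Finset.card_le_card (supp_subset_of_mem_vanishOn hu)
    unfold wt at h2
    omega
  rw [h0, finrank_bot] at h
  exact h

lemma colRank_compl_of_card_eq_two {k n : ℕ} (M : Matrix (Fin k) (Fin n) (ZMod 2))
    (hr : M.rank = k)
    (hd : ∀ c ∈ LinearMap.range M.vecMulLinear, c ≠ 0 → 2 ≤ wt c)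
    (T : Finset (Fin n)) (hT : T.card = 2) :
    colRank M Tᶜ + (if indVec T ∈ LinearMap.range M.vecMulLinear then 1 else 0) = k := by
  have h := colRank_add_finrank_ker M Tᶜ
  have inj := vecMulLinear_injective_of_rank M hr
  have key : ∀ u ∈ vanishOn M Tᶜ, u ≠ 0 → M.vecMulLinear u = indVec T := by
    intro u hu hne
    have h2 := hd _ ⟨u, rfl⟩ (fun h0 => hne (inj (h0.trans (map_zero _).symm)))
    have h3 := Finset.eq_of_subset_of_card_le (supp_subset_of_mem_vanishOn hu)
      (by unfold wt at h2; omega)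
    rw [← h3, indVec_supp]
  split_ifs with hc
  · obtain ⟨u, hu⟩ := hc
    have hu0 : u ≠ 0 := by
      rintro rfl
      have := wt_indVec T
      rw [← hu, map_zero, hT] at this
      simp [wt] at this
    have hs : vanishOn M Tᶜ = Submodule.span (ZMod 2) {u} := by
      apply le_antisymm
      · intro v hv
        by_cases hv0 : v = 0
        · rw [hv0]; exact Submodule.zero_mem _
        · rw [inj ((key v hv hv0).trans hu.symm)]
          exact Submodule.mem_span_singleton_self u
      · rw [Submodule.span_singleton_le_iff_mem, mem_vanishOn]
        intro i hi
        rw [hu]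
        simpa [indVec] using hi
    rwa [hs, finrank_span_singleton hu0] at h
  · have h0 : vanishOn M Tᶜ = ⊥ := by
      rw [Submodule.eq_bot_iff]
      intro u hu
      by_contra hne
      exact hc ⟨u, key u hu hne⟩
    rwa [h0, finrank_bot] at h

/-! ### Information functions near full length -/

/-- Reindexing the information function by the complements, that is by the deleted columns. -/
lemma infoFun_sub {k n : ℕ} (M : Matrix (Fin k) (Fin n) (ZMod 2)) (g : ℕ) (hg : g ≤ n) :
    infoFun M (n - g) = ∑ T ∈ Finset.powersetCard g Finset.univ, colRank M Tᶜ := by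
  unfold infoFun
  refine Finset.sum_nbij' (fun S => Sᶜ) (fun S => Sᶜ) ?_ ?_ ?_ ?_ ?_
  · intro S hS
    simp only [Finset.mem_filter, Finset.mem_univ, true_and] at hS
    simp [Finset.mem_powersetCard, Finset.card_compl, hS]
    omega
  · intro S hS
    simp only [Finset.mem_powersetCard, Finset.subset_univ, true_and] at hS
    simp [Finset.card_compl, hS]
  · intro S _; simp
  · intro S _; simp
  · intro S _; simp

/-- A binary vector is determined by its support, so weight-2 codewords correspond to the pairs
of coordinates whose indicator vector is a codeword. -/
lemma card_wt_two {k n : ℕ} (M : Matrix (Fin k) (Fin n) (ZMod 2)) :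
    (Finset.univ.filter (fun c : Fin n → ZMod 2 =>
      c ∈ LinearMap.range M.vecMulLinear ∧ wt c = 2)).card
    = ∑ T ∈ Finset.powersetCard 2 (Finset.univ : Finset (Fin n)),
        (if indVec T ∈ LinearMap.range M.vecMulLinear then 1 else 0) := by
  rw [← Finset.card_filter]
  refine Finset.card_nbij' (fun c => Finset.univ.filter (fun i => c i ≠ 0)) indVec ?_ ?_ ?_ ?_
  · intro c hc
    have hc' := (Finset.mem_filter.1 hc).2
    refine Finset.mem_filter.2 ⟨Finset.mem_powersetCard.2 ⟨Finset.subset_univ _, hc'.2⟩, ?_⟩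
    rw [indVec_supp]
    exact hc'.1
  · intro T hT
    have hT' := Finset.mem_filter.1 hT
    exact Finset.mem_filter.2 ⟨Finset.mem_univ _, hT'.2,
      (wt_indVec T).trans (Finset.mem_powersetCard.1 hT'.1).2⟩
  · intro c _; exact indVec_supp c
  · intro T _; exact supp_indVec T

lemma infoFun_top {k n : ℕ} (M : Matrix (Fin k) (Fin n) (ZMod 2)) (hr : M.rank = k)
    (hd : ∀ c ∈ LinearMap.range M.vecMulLinear, c ≠ 0 → 2 ≤ wt c) :
    infoFun M n = k := by
  have h := infoFun_sub M 0 (Nat.zero_le n)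
  rw [Nat.sub_zero] at h
  rw [h, Finset.powersetCard_zero, Finset.sum_singleton]
  exact colRank_compl_of_card_le_one M hr hd _ (by simp)

lemma infoFun_sub_one {k n : ℕ} (M : Matrix (Fin k) (Fin n) (ZMod 2)) (hr : M.rank = k)
    (hd : ∀ c ∈ LinearMap.range M.vecMulLinear, c ≠ 0 → 2 ≤ wt c) (hn : 1 ≤ n) :
    infoFun M (n - 1) = n * k := by
  rw [infoFun_sub M 1 hn, Finset.sum_congr rfl (fun T hT =>
    colRank_compl_of_card_le_one M hr hd T (Finset.mem_powersetCard.1 hT).2.le)]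
  simp

lemma infoFun_sub_two {k n : ℕ} (M : Matrix (Fin k) (Fin n) (ZMod 2)) (hr : M.rank = k)
    (hd : ∀ c ∈ LinearMap.range M.vecMulLinear, c ≠ 0 → 2 ≤ wt c) (hn : 2 ≤ n) :
    infoFun M (n - 2) + (Finset.univ.filter (fun c : Fin n → ZMod 2 =>
      c ∈ LinearMap.range M.vecMulLinear ∧ wt c = 2)).card = n.choose 2 * k := by
  rw [infoFun_sub M 2 hn, card_wt_two, ← Finset.sum_add_distrib, Finset.sum_congr rfl (fun T hT =>
    colRank_compl_of_card_eq_two M hr hd T (Finset.mem_powersetCard.1 hT).2)]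
  simp

/-- A nonzero codeword of weight at least `2` exists since `k ≥ 1`. This guarantees that the term
`t = 1` occurs in the sum over `t < n`. -/
lemma two_le_length {k n : ℕ} (hk : 1 ≤ k) (M : Matrix (Fin k) (Fin n) (ZMod 2))
    (hr : M.rank = k)
    (hd : ∀ c ∈ LinearMap.range M.vecMulLinear, c ≠ 0 → 2 ≤ wt c) : 2 ≤ n := by
  have hne : M.vecMulLinear (fun _ => 1) ≠ 0 := fun h0 => by
    have := congrFun (vecMulLinear_injective_of_rank M hr (h0.trans (map_zero _).symm)) ⟨0, hk⟩
    simp at this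
  refine (hd _ ⟨_, rfl⟩ hne).trans ?_
  unfold wt
  exact (Finset.card_le_univ _).trans (by simp)

/-! ### Behaviour of the polynomial at zero -/

lemma bernstein_sum_zero (m : ℕ) (a : ℕ → ℝ) :
    ∑ t ∈ Finset.range (m + 2), a t * (0 : ℝ) ^ t * (1 - 0) ^ (m + 2 - 1 - t) = a 0 := by
  rw [Finset.sum_eq_single 0]
  · simp
  · intro t _ ht; simp [ht]
  · simp

/-- Only the term `t = 1` contributes to the derivative at `0` when `a 0 = 0`. -/
lemma hasDerivAt_bernstein_sum (m : ℕ) (a : ℕ → ℝ) (h0 : a 0 = 0) :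
    HasDerivAt (fun x : ℝ => ∑ t ∈ Finset.range (m + 2), a t * x ^ t * (1 - x) ^ (m + 2 - 1 - t))
      (a 1) 0 := by
  have h : ∀ t ∈ Finset.range (m + 2), HasDerivAt
      (fun x : ℝ => a t * x ^ t * (1 - x) ^ (m + 2 - 1 - t)) (if t = 1 then a 1 else 0) 0 := by
    intro t _
    have h1 := ((hasDerivAt_pow t (0 : ℝ)).const_mul (a t)).mul
      (((hasDerivAt_id (0 : ℝ)).const_sub 1).pow (m + 2 - 1 - t))
    refine h1.congr_deriv ?_
    rcases t with _ | _ | t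
    · simp [h0]
    · simp
    · simp
  refine (HasDerivAt.fun_sum h).congr_deriv ?_
  simp

theorem stmt8 (k nc : ℕ) (hk : 1 ≤ k) (n : Fin nc → ℕ)
    (C : ∀ h : Fin nc, Matrix (Fin k) (Fin (n h)) (ZMod 2))
    (hrank : ∀ h, (C h).rank = k)
    (hdmin : ∀ h, ∀ c ∈ LinearMap.range (C h).vecMulLinear, c ≠ 0 → 2 ≤ wt c)
    (P : Fin nc → ℝ) (hP : ∀ h, 0 ≤ P h) (hPsum : ∑ h, P h = 1)
    (a : Fin nc → ℕ → ℝ)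
    (ha : ∀ h t, a h t
      = ((n h - t : ℕ) : ℝ) * (infoFun (C h) (n h - t) : ℝ)
        - ((t + 1 : ℕ) : ℝ) * (infoFun (C h) (n h - 1 - t) : ℝ))
    (f : ℝ → ℝ → ℝ)
    (hf : ∀ x G, f x G
      = 1 - Real.exp (-(G / k) * ∑ h, P h *
          ∑ t ∈ Finset.range (n h), a h t * x ^ t * (1 - x) ^ (n h - 1 - t)))
    (A2bar : ℝ)
    (hA2 : A2bar = ∑ h, P h *
        ((Finset.univ.filter (fun c : Fin (n h) → ZMod 2 =>
          c ∈ LinearMap.range (C h).vecMulLinear ∧ wt c = 2)).card : ℝ)) :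
    ∀ G : ℝ, f 0 G = 0 ∧ deriv (fun x => f x G) 0 = 2 * G / k * A2bar := by
  have hn : ∀ h, 2 ≤ n h := fun h => two_le_length hk (C h) (hrank h) (hdmin h)
  have ha0 : ∀ h, a h 0 = 0 := by
    intro h
    have h1 := infoFun_top (C h) (hrank h) (hdmin h)
    have h2 := infoFun_sub_one (C h) (hrank h) (hdmin h) (by have := hn h; omega)
    rw [ha]
    simp only [Nat.sub_zero, h1, h2]
    push_cast
    ring
  have ha1 : ∀ h, a h 1 = 2 * ((Finset.univ.filter (fun c : Fin (n h) → ZMod 2 =>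
      c ∈ LinearMap.range (C h).vecMulLinear ∧ wt c = 2)).card : ℝ) := by
    intro h
    have h1 := infoFun_sub_one (C h) (hrank h) (hdmin h) (by have := hn h; omega)
    have h2 := congrArg (Nat.cast : ℕ → ℝ) (infoFun_sub_two (C h) (hrank h) (hdmin h) (hn h))
    rw [ha, Nat.sub_sub, h1]
    push_cast [Nat.cast_choose_two, Nat.cast_sub (show 1 ≤ n h by have := hn h; omega)] at h2 ⊢
    linear_combination -2 * h2
  have hz : ∀ h, ∑ t ∈ Finset.range (n h), a h t * (0 : ℝ) ^ t * (1 - 0) ^ (n h - 1 - t) = 0 := by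
    intro h
    obtain ⟨m, hm⟩ := Nat.exists_eq_add_of_le' (hn h)
    rw [hm, bernstein_sum_zero, ha0]
  have hD : ∀ h, HasDerivAt (fun x : ℝ => ∑ t ∈ Finset.range (n h),
      a h t * x ^ t * (1 - x) ^ (n h - 1 - t)) (a h 1) 0 := by
    intro h
    obtain ⟨m, hm⟩ := Nat.exists_eq_add_of_le' (hn h)
    rw [hm]
    exact hasDerivAt_bernstein_sum m _ (ha0 h)
  intro G
  refine ⟨by simp only [hf, hz, mul_zero, Finset.sum_const_zero, Real.exp_zero, sub_self], ?_⟩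
  have hfun : (fun x => f x G) = fun x => 1 - Real.exp (-(G / k) * ∑ h, P h *
      ∑ t ∈ Finset.range (n h), a h t * x ^ t * (1 - x) ^ (n h - 1 - t)) :=
    funext fun x => hf x G
  have hsum := HasDerivAt.fun_sum (u := Finset.univ) (fun h _ => (hD h).const_mul (P h))
  have hder := ((hsum.const_mul (-(G / k))).exp).const_sub 1
  rw [hfun, hder.deriv, hA2]
  simp only [hz, mul_zero, Finset.sum_const_zero, Real.exp_zero, ha1, one_mul, neg_mul, neg_neg]
  rw [Finset.mul_sum, Finset.mul_sum]
  exact Finset.sum_congr rfl fun h _ => by ring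
end

section
/- Let k ≥ 1 be an integer and define, for real x and G > 0, f(x,G) := 1 − exp( −((k+1)G/k)·(1 − (1−x)^k) ). Then: (i) f(0,G) = 0 for every G and the partial derivative ∂f/∂x(0,G) = (k+1)G, so the pair (x,G) = (0, 1/(k+1)) satisfies both f(x,G) = x and ∂f/∂x(x,G) = 1; and (ii) for every G with 0 < G < 1/(k+1) there is no x ∈ [0,1) such that f(x,G) = x and ∂f/∂x(x,G) = 1. Consequently, the smallest G > 0 for which the system f(x,G) = x, ∂f/∂x(x,G) = 1 admits a solution with 0 ≤ x < 1 is G = 1/(k+1). -/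
/-!
With `f x G = 1 - exp (-((k+1)G/k) (1 - (1-x)^k))` one has
`∂f/∂x = (k+1) G (1-x)^(k-1) exp (-((k+1)G/k) (1 - (1-x)^k))`.
For `0 ≤ x < 1` and `G > 0` the last two factors are at most `1`, so the derivative is at most
`(k+1) G`; hence it is below `1` as soon as `G < 1/(k+1)`, and tangency is impossible whether or
not `x` is a fixed point. At `x = 0` both factors equal `1`, so `G = 1/(k+1)` is attained.
-/

theorem hasDerivAt_spc (k : ℕ) (hk : 1 ≤ k) (G x : ℝ) :
    HasDerivAt (fun x : ℝ => 1 - Real.exp (-(((k : ℝ) + 1) * G / k) * (1 - (1 - x) ^ k)))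
      (((k : ℝ) + 1) * G * (1 - x) ^ (k - 1)
        * Real.exp (-(((k : ℝ) + 1) * G / k) * (1 - (1 - x) ^ k))) x := by
  have hk0 : (k : ℝ) ≠ 0 := by
    have : k ≠ 0 := by omega
    exact_mod_cast this
  have h := ((((((hasDerivAt_id x).const_sub 1).fun_pow k).const_sub 1).const_mul
    (-(((k : ℝ) + 1) * G / k))).exp).const_sub 1
  simp only [id_eq] at h
  refine h.congr_deriv ?_
  generalize Real.exp _ = e
  field_simp

theorem stmt12 (k : ℕ) (hk : 1 ≤ k) (f : ℝ → ℝ → ℝ)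
    (hf : ∀ x G, f x G
      = 1 - Real.exp (-(((k : ℝ) + 1) * G / k) * (1 - (1 - x) ^ k))) :
    (∀ G : ℝ, f 0 G = 0 ∧ deriv (fun x => f x G) 0 = ((k : ℝ) + 1) * G) ∧
    (∀ G : ℝ, 0 < G → G < 1 / ((k : ℝ) + 1) →
      ¬ ∃ x : ℝ, 0 ≤ x ∧ x < 1 ∧ f x G = x ∧ deriv (fun x => f x G) x = 1) ∧
    IsLeast {G : ℝ | 0 < G ∧
        ∃ x : ℝ, 0 ≤ x ∧ x < 1 ∧ f x G = x ∧ deriv (fun x => f x G) x = 1}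
      (1 / ((k : ℝ) + 1)) := by
  have hk1 : (0 : ℝ) < (k : ℝ) + 1 := by positivity
  have hd : ∀ G x, deriv (fun x => f x G) x = ((k : ℝ) + 1) * G * (1 - x) ^ (k - 1)
      * Real.exp (-(((k : ℝ) + 1) * G / k) * (1 - (1 - x) ^ k)) := by
    intro G x
    simp only [hf]
    exact (hasDerivAt_spc k hk G x).deriv
  have h1 : ∀ G : ℝ, f 0 G = 0 ∧ deriv (fun x => f x G) 0 = ((k : ℝ) + 1) * G := by
    intro G
    rw [hd, hf]
    simp
  have h2 : ∀ G : ℝ, 0 < G → G < 1 / ((k : ℝ) + 1) →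
      ¬ ∃ x : ℝ, 0 ≤ x ∧ x < 1 ∧ f x G = x ∧ deriv (fun x => f x G) x = 1 := by
    rintro G hG hlt ⟨x, hx0, hx1, -, hx⟩
    rw [hd] at hx
    have hp : (1 - x) ^ (k - 1) ≤ 1 := pow_le_one₀ (by linarith) (by linarith)
    have hq : (1 - x) ^ k ≤ 1 := pow_le_one₀ (by linarith) (by linarith)
    have he : Real.exp (-(((k : ℝ) + 1) * G / k) * (1 - (1 - x) ^ k)) ≤ 1 := by
      rw [Real.exp_le_one_iff, neg_mul, neg_nonpos]
      exact mul_nonneg (by positivity) (by linarith)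
    have hc : ((k : ℝ) + 1) * G < 1 := by
      rwa [lt_div_iff₀ hk1, mul_comm] at hlt
    have hpe := mul_le_one₀ hp (Real.exp_pos _).le he
    rw [mul_assoc] at hx
    have := mul_le_of_le_one_right (by positivity : 0 ≤ ((k : ℝ) + 1) * G) hpe
    linarith
  refine ⟨h1, h2, ⟨by positivity, 0, le_rfl, one_pos, (h1 _).1, ?_⟩, ?_⟩
  · rw [(h1 _).2]
    field_simp
  · rintro G ⟨hG, hx⟩
    by_contra! hlt
    exact h2 G hG hlt hx
end
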